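/- Let A be a unital Banach algebra, H a complex Hilbert space, and Φ : A → B(H) a bounded unital algebra homomorphism with operator norm K. Suppose that for every f ∈ A with ‖f‖ ≤ 1 there exists g ∈ A with ‖g‖ ≤ 1 and ‖Φ(f) + Φ(g)*‖ ≤ 2. Then K ≤ 1 + √2. -/

import Mathlib

theorem stmt_1 {A : Type*} [NormedRing A] [NormedAlgebra ℂ A] [NormOneClass A]
    {H : Type*} [NormedAddCommGroup H] [InnerProductSpace ℂ H] [CompleteSpace H]
    (Φ : A →L[ℂ] (H →L[ℂ] H))
    (hmul : ∀ a b : A, Φ (a * b) = Φ a * Φ b)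
    (hone : Φ 1 = 1)
    (h : ∀ f : A, ‖f‖ ≤ 1 → ∃ g : A, ‖g‖ ≤ 1 ∧
      ‖Φ f + ContinuousLinearMap.adjoint (Φ g)‖ ≤ 2) :
    ‖Φ‖ ≤ 1 + Real.sqrt 2 := by
  by_contra! hK
  have hs2 : Real.sqrt 2 ^ 2 = 2 := Real.sq_sqrt (by norm_num)
  have hs0 : 1 ≤ Real.sqrt 2 := Real.one_le_sqrt.mpr (by norm_num)
  obtain ⟨d, hd⟩ : ∃ d, d = (‖Φ‖ - (1 + Real.sqrt 2)) / 2 := ⟨_, rfl⟩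
  have hd0 : 0 < d := by linarith
  obtain ⟨f, hf, hft⟩ := Φ.exists_lt_apply_of_lt_opNorm
    (r := 1 + Real.sqrt 2 + d) (by linarith)
  obtain ⟨g, hg, hS⟩ := h f hf.le
  have hkey : ‖Φ f‖ ^ 4 ≤ ‖Φ f‖ * (2 * ‖Φ f‖ ^ 2 + ‖Φ‖) := by
    have e1 : ‖Φ f‖ ^ 4 = ‖star (Φ f) * (Φ f * star (Φ f) * Φ f)‖ := by
      have : star (Φ f) * (Φ f * star (Φ f) * Φ f)
          = star (star (Φ f) * Φ f) * (star (Φ f) * Φ f) := by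
        simp [mul_assoc]
      rw [this, CStarRing.norm_star_mul_self, CStarRing.norm_star_mul_self]
      ring
    have e2 : Φ f * star (Φ f) * Φ f
        = Φ f * star (Φ f + star (Φ g)) * Φ f - Φ (f * g * f) := by
      rw [hmul, hmul, star_add, star_star]
      noncomm_ring
    have hS' : ‖star (Φ f + star (Φ g))‖ ≤ 2 := by
      rw [norm_star]; exact hS
    have e3 : ‖Φ (f * g * f)‖ ≤ ‖Φ‖ := by
      refine Φ.unit_le_opNorm _ ?_
      calc ‖f * g * f‖ ≤ ‖f‖ * ‖g‖ * ‖f‖ := norm_mul₃_le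
        _ ≤ 1 * 1 * 1 := by gcongr
        _ = 1 := by norm_num
    have e4 : ‖Φ f * star (Φ f + star (Φ g)) * Φ f‖ ≤ 2 * ‖Φ f‖ ^ 2 := by
      calc _ ≤ ‖Φ f‖ * ‖star (Φ f + star (Φ g))‖ * ‖Φ f‖ := norm_mul₃_le
        _ ≤ ‖Φ f‖ * 2 * ‖Φ f‖ := by gcongr
        _ = _ := by ring
    rw [e1]
    refine (norm_mul_le _ _).trans ?_
    rw [norm_star, e2]
    gcongr
    exact (norm_sub_le _ _).trans (add_le_add e4 e3)
  generalize ‖Φ f‖ = t at *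
  generalize Real.sqrt 2 = s at *
  have ht : 0 < t := by linarith
  have h3 : t ^ 3 ≤ 2 * t ^ 2 + ‖Φ‖ := by
    refine le_of_mul_le_mul_left ?_ ht
    linarith [hkey, show t * t ^ 3 = t ^ 4 by ring]
  have hKd : ‖Φ‖ = 1 + s + 2 * d := by linarith
  have h4 : (1 + s + d) ^ 2 * (1 + s + d - 2) ≤ t ^ 2 * (t - 2) := by
    have : 0 ≤ 1 + s + d - 2 := by linarith
    gcongr
  have h5 : (1 + s + d) ^ 2 * (1 + s + d - 2)
      = (1 + s) + (2 * (1 + s) + 3) * d + (3 * (1 + s) - 2) * d ^ 2 + d ^ 3 := by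
    linear_combination (s + 1 + 3 * d) * hs2
  have h6 : 0 < s * d := by positivity
  have h7 : 0 < s * d ^ 2 := by positivity
  have h8 : 0 < d ^ 3 := by positivity
  have h9 : 0 < d ^ 2 := by positivity
  linarith
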